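/- For every k > 0 and every integer T with T < k/γ̂, there exists a starting point x ∈ Δ_G such that the Gibbs sampler on Δ_G started from X_0 = x satisfies ‖L(X_T) − U_G‖_TV ≥ (1/2)·e^{−k} − 4·n^{−1/3}. -/

import Mathlib

open MeasureTheory

noncomputable section

/-- Uniform probability measure on a finset. -/
def unifOn {α : Type*} [MeasurableSpace α] (s : Finset α) : Measure α :=
  (s.card : ENNReal)⁻¹ • ∑ a ∈ s, Measure.dirac a

/-- Total variation distance between two measures. -/
def tvDist {α : Type*} [MeasurableSpace α] (μ ν : Measure α) : ℝ :=
  ⨆ A : {A : Set α // MeasurableSet A}, ((μ A).toReal - (ν A).toReal)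

variable (G : Type*) [Group G] [Fintype G] [DecidableEq G] [MeasurableSpace G]
  [DiscreteMeasurableSpace G]

/-- The simplex of probability vectors indexed by `G`. -/
def simplexG : Set (G → ℝ) := {x | (∀ g, 0 ≤ x g) ∧ ∑ g, x g = 1}

/-- The uniform (normalized `(n-1)`-dimensional Hausdorff) measure on the simplex. -/
def UG : Measure (G → ℝ) :=
  (μH[(Fintype.card G : ℝ) - 1] (simplexG G))⁻¹ •
    (μH[(Fintype.card G : ℝ) - 1]).restrict (simplexG G)

/-- One step of the Gibbs sampler on the simplex from update datum `(g, r, λ)`. -/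
def gibbsStepG (x : G → ℝ) (u : G × G × ℝ) : G → ℝ := fun h =>
  if h = u.1 then u.2.2 * (x u.1 + x (u.1 * u.2.1))
  else if h = u.1 * u.2.1 then (1 - u.2.2) * (x u.1 + x (u.1 * u.2.1))
  else x h

/-- Law of the random update datum: `g` uniform on `G`, `r` uniform on `R`,
`λ` uniform on `[0,1]`. -/
def driveG (R : Finset G) : Measure (G × G × ℝ) :=
  (unifOn (Finset.univ : Finset G)).prod
    ((unifOn R).prod ((volume : Measure ℝ).restrict (Set.Icc 0 1)))

/-- Law of the Gibbs sampler after `T` steps started at `x`. -/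
def lawG (R : Finset G) (x : G → ℝ) (T : ℕ) : Measure (G → ℝ) :=
  Measure.map (fun ω : Fin T → G × G × ℝ => (List.ofFn ω).foldl (gibbsStepG G) x)
    (Measure.pi fun _ => driveG G R)

/-- The transition matrix of the slowed simple random walk on `G`. -/
def KhatM (R : Finset G) : G → G → ℝ := fun z w =>
  if z = w then 1 - 2 / (Fintype.card G : ℝ)
  else if z⁻¹ * w ∈ R then 2 / ((Fintype.card G : ℝ) * R.card) else 0

/-- The spectral gap `γ̂ = 1 - λ̂₂` of `K̂`, with the second-largest eigenvalue
expressed by the variational (Courant–Fischer) characterization. -/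
def gapHat (R : Finset G) : ℝ :=
  1 - sSup {lam : ℝ | ∃ v : G → ℝ, ∑ g, v g = 0 ∧ ∑ g, (v g) ^ 2 = 1 ∧
    lam = ∑ g, ∑ h, v g * KhatM G R g h * v h}


set_option linter.unusedSectionVars false

/-- The hyperplane of zero-sum vectors. -/
def V0 : Submodule ℝ (G → ℝ) where
  carrier := {v | ∑ g, v g = 0}
  add_mem' := by
    intro a b ha hb
    simp only [Set.mem_ofPred_eq, Pi.add_apply, Finset.sum_add_distrib] at *
    rw [ha, hb, add_zero]
  zero_mem' := by simp
  smul_mem' := by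
    intro c a ha
    simp only [Set.mem_ofPred_eq, Pi.smul_apply, smul_eq_mul, ← Finset.mul_sum] at *
    rw [ha, mul_zero]

lemma mem_V0 (v : G → ℝ) : v ∈ V0 G ↔ ∑ g, v g = 0 := Iff.rfl

lemma finrank_V0 : (Module.finrank ℝ (V0 G) : ℝ) = (Fintype.card G : ℝ) - 1 := by
  let φ : (G → ℝ) →ₗ[ℝ] ℝ := ∑ g, LinearMap.proj g
  have hφ : ∀ v, φ v = ∑ g, v g := by intro v; simp [φ]
  have hk : LinearMap.ker φ = V0 G := by
    ext v
    rw [LinearMap.mem_ker, hφ, mem_V0]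
  have hr : LinearMap.range φ = ⊤ := by
    rw [LinearMap.range_eq_top]
    intro c
    refine ⟨Pi.single 1 c, ?_⟩
    rw [hφ]
    simp
  have h := LinearMap.finrank_range_add_finrank_ker φ
  rw [hk, hr, finrank_top, Module.finrank_self, Module.finrank_fintype_fun_eq_card] at h
  have h2 : (1 : ℝ) + Module.finrank ℝ (V0 G) = Fintype.card G := by exact_mod_cast h
  linarith

lemma measurableSet_simplexG : MeasurableSet (simplexG G) := by
  unfold simplexG
  apply MeasurableSet.inter
  · have : {x : G → ℝ | ∀ g, 0 ≤ x g} = ⋂ g, {x | 0 ≤ x g} := by ext; simp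
    change MeasurableSet {x : G → ℝ | ∀ g, 0 ≤ x g}
    rw [this]
    exact MeasurableSet.iInter fun g => measurableSet_le measurable_const (measurable_pi_apply g)
  · exact measurableSet_eq_fun (Finset.measurable_sum _ fun g _ => measurable_pi_apply g)
      measurable_const

/-- Hausdorff measure restricted to the simplex. -/
def HS : Measure (G → ℝ) := (μH[(Fintype.card G : ℝ) - 1]).restrict (simplexG G)

/-- Parametrization of the affine hyperplane. -/
def iotaV (u : G → ℝ) : V0 G → (G → ℝ) := fun v => (v : G → ℝ) + u

lemma iotaV_isometry (u : G → ℝ) : Isometry (iotaV G u) := by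
  intro a b
  simp [iotaV, Subtype.edist_eq]

lemma iotaV_range (u : G → ℝ) (hu : ∑ g, u g = 1) : simplexG G ⊆ Set.range (iotaV G u) := by
  intro x hx
  refine ⟨⟨x - u, ?_⟩, ?_⟩
  · rw [mem_V0]; simp [Finset.sum_sub_distrib, hu, hx.2]
  · simp [iotaV]

lemma HS_eq_map (u : G → ℝ) (hu : ∑ g, u g = 1) :
    HS G = Measure.map (iotaV G u)
      ((μH[(Module.finrank ℝ (V0 G) : ℝ)]).restrict (iotaV G u ⁻¹' simplexG G)) := by
  have hm : Measurable (iotaV G u) := (iotaV_isometry G u).continuous.measurable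
  rw [← Measure.restrict_map hm (measurableSet_simplexG G),
    (iotaV_isometry G u).map_hausdorffMeasure (Or.inl (Nat.cast_nonneg _)),
    Measure.restrict_restrict (measurableSet_simplexG G),
    Set.inter_eq_left.2 (iotaV_range G u hu), finrank_V0, HS]

lemma simplex_le_one {x : G → ℝ} (hx : x ∈ simplexG G) (g : G) : x g ≤ 1 := by
  rw [← hx.2]
  exact Finset.single_le_sum (f := x) (fun i _ => hx.1 i) (Finset.mem_univ g)

lemma isFinite_HS : IsFiniteMeasure (HS G) := by
  set u : G → ℝ := Pi.single 1 1 with hu0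
  have hu : ∑ g, u g = 1 := by simp [u]
  rw [HS_eq_map G u hu]
  have hm : Measurable (iotaV G u) := (iotaV_isometry G u).continuous.measurable
  have : IsFiniteMeasure ((μH[(Module.finrank ℝ (V0 G) : ℝ)]).restrict
      (iotaV G u ⁻¹' simplexG G)) := by
    constructor
    rw [Measure.restrict_apply_univ]
    refine lt_of_le_of_lt (measure_mono (t := Metric.closedBall 0 2) ?_)
      measure_closedBall_lt_top
    intro v hv
    rw [mem_closedBall_zero_iff, ← Submodule.norm_coe, pi_norm_le_iff_of_nonneg (by norm_num)]
    intro g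
    have h1 := simplex_le_one G hv g
    have h2 := hv.1 g
    simp only [iotaV, Pi.add_apply] at h1 h2
    have h3 : 0 ≤ u g ∧ u g ≤ 1 := by
      simp only [u, Pi.single_apply]; split_ifs <;> norm_num
    rw [Real.norm_eq_abs, abs_le]
    constructor <;> linarith [h3.1, h3.2]
  infer_instance

lemma HS_ae : ∀ᵐ x ∂(HS G), x ∈ simplexG G :=
  ae_restrict_mem (measurableSet_simplexG G)

lemma pair_transform (h3 : 3 ≤ Fintype.card G) (z w : G) (hzw : z ≠ w) :
    ∫ x, (x z) ^ 2 ∂(HS G) = 2 * ∫ x in {x | x w ≤ x z}, (x z - x w) ^ 2 ∂(HS G) := by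
  obtain ⟨g3, hg3⟩ : ∃ g3, g3 ∉ ({z, w} : Finset G) := by
    by_contra hcon
    push Not at hcon
    have : Finset.univ ⊆ ({z, w} : Finset G) := fun g _ => hcon g
    have h := Finset.card_le_card this
    have h' := Finset.card_le_two (a := z) (b := w)
    rw [Finset.card_univ] at h
    omega
  have h3z : z ≠ g3 := by rintro rfl; simp at hg3
  have h3w : w ≠ g3 := by rintro rfl; simp at hg3
  set u : G → ℝ := Pi.single g3 1 with hu0
  have hu : ∑ g, u g = 1 := by simp [u]
  have huz : u z = 0 := by simp [u, h3z]
  have huw : u w = 0 := by simp [u, h3w]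
  have hm : Measurable (iotaV G u) := (iotaV_isometry G u).continuous.measurable
  have hmP : MeasurableSet (iotaV G u ⁻¹' simplexG G) := hm (measurableSet_simplexG G)
  have hmQ : MeasurableSet {x : G → ℝ | x w ≤ x z} :=
    measurableSet_le (measurable_pi_apply w) (measurable_pi_apply z)
  set μ : Measure (V0 G) := μH[(Module.finrank ℝ (V0 G) : ℝ)] with hμ
  -- the shear
  let ℓ : Module.Dual ℝ (V0 G) := (LinearMap.proj w).comp (V0 G).subtype
  let e : V0 G := ⟨Pi.single w 1 - Pi.single z 1, by rw [mem_V0]; simp⟩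
  have hdet : LinearMap.det (LinearMap.transvection ℓ e) = 2 := by
    rw [LinearMap.transvection.det]
    simp [ℓ, e, hzw.symm]
    norm_num
  have hL : ∀ v g, ((LinearMap.transvection ℓ e v : V0 G) : G → ℝ) g =
      (v : G → ℝ) g + (v : G → ℝ) w * ((Pi.single w 1 - Pi.single z 1 : G → ℝ) g) := by
    intro v g
    simp [LinearMap.transvection, ℓ, e]
  have hLm : Measurable (LinearMap.transvection ℓ e) :=
    (LinearMap.continuous_of_finiteDimensional _).measurable
  have hmap := Measure.map_linearMap_addHaar_eq_smul_addHaar μ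
    (f := LinearMap.transvection ℓ e) (by rw [hdet]; norm_num)
  rw [hdet] at hmap
  -- rewrite integrals
  have e1 : ∫ x, (x z) ^ 2 ∂(HS G) =
      ∫ v, (iotaV G u ⁻¹' simplexG G).indicator (fun v => (iotaV G u v z) ^ 2) v ∂μ := by
    rw [HS_eq_map G u hu, integral_map hm.aemeasurable
      (((measurable_pi_apply z).pow_const 2).aestronglyMeasurable), integral_indicator hmP]
  have e2 : ∫ x in {x | x w ≤ x z}, (x z - x w) ^ 2 ∂(HS G) =
      ∫ v, (iotaV G u ⁻¹' simplexG G).indicator (fun v => (iotaV G u v z) ^ 2)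
        (LinearMap.transvection ℓ e v) ∂μ := by
    have hmm : Measurable (fun x : G → ℝ => (x z - x w) ^ 2) := by fun_prop
    rw [HS_eq_map G u hu, setIntegral_map hmQ hmm.aestronglyMeasurable hm.aemeasurable, Measure.restrict_restrict (hm hmQ),
      ← integral_indicator ((hm hmQ).inter hmP)]
    congr 1
    ext v
    have key : (LinearMap.transvection ℓ e v ∈ iotaV G u ⁻¹' simplexG G) ↔
        v ∈ iotaV G u ⁻¹' {x : G → ℝ | x w ≤ x z} ∩ iotaV G u ⁻¹' simplexG G := by
      have hLz : ((LinearMap.transvection ℓ e v : V0 G) : G → ℝ) z =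
          (v : G → ℝ) z - (v : G → ℝ) w := by rw [hL]; simp [hzw]; ring
      have hLw : ((LinearMap.transvection ℓ e v : V0 G) : G → ℝ) w =
          2 * (v : G → ℝ) w := by rw [hL]; simp [hzw.symm]; ring
      have hLg : ∀ g, g ≠ z → g ≠ w → ((LinearMap.transvection ℓ e v : V0 G) : G → ℝ) g =
          (v : G → ℝ) g := by intro g h1 h2; rw [hL]; simp [h1, h2]
      have hs1 : ∀ v : V0 G, ∑ g, iotaV G u v g = 1 := by
        intro v
        have := (mem_V0 G _).1 v.2
        simp [iotaV, Finset.sum_add_distrib, this, hu]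
      constructor
      · intro h
        have hz := h.1 z
        have hw := h.1 w
        simp only [iotaV, Pi.add_apply, hLz, hLw, huz, huw] at hz hw
        refine ⟨?_, ?_, hs1 v⟩
        · simp only [Set.mem_preimage, Set.mem_ofPred_eq, iotaV, Pi.add_apply, huz, huw]; linarith
        · intro g
          by_cases h1 : g = z
          · subst h1; simp only [iotaV, Pi.add_apply, huz]; linarith
          by_cases h2 : g = w
          · subst h2; simp only [iotaV, Pi.add_apply, huw]; linarith
          have := h.1 g
          simpa only [iotaV, Pi.add_apply, hLg g h1 h2] using this
      · rintro ⟨hq, h⟩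
        have hw := h.1 w
        simp only [Set.mem_preimage, Set.mem_ofPred_eq, iotaV, Pi.add_apply, huz, huw] at hq hw
        refine ⟨?_, hs1 _⟩
        intro g
        by_cases h1 : g = z
        · subst h1; simp only [iotaV, Pi.add_apply, huz, hLz]; linarith
        by_cases h2 : g = w
        · subst h2; simp only [iotaV, Pi.add_apply, huw, hLw]; linarith
        have := h.1 g
        simpa only [iotaV, Pi.add_apply, hLg g h1 h2] using this
    by_cases hv : v ∈ iotaV G u ⁻¹' {x : G → ℝ | x w ≤ x z} ∩ iotaV G u ⁻¹' simplexG G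
    · rw [Set.indicator_of_mem hv, Set.indicator_of_mem (key.2 hv)]
      simp only [iotaV, Pi.add_apply, hL, huz, huw]
      simp [hzw]
      ring
    · rw [Set.indicator_of_notMem hv, Set.indicator_of_notMem (fun h => hv (key.1 h))]
  have hgm : Measurable ((iotaV G u ⁻¹' simplexG G).indicator
      (fun v => (iotaV G u v z) ^ 2)) :=
    (((measurable_pi_apply z).comp hm).pow_const 2).indicator hmP
  have e3 := integral_map (μ := μ) hLm.aemeasurable
    (f := (iotaV G u ⁻¹' simplexG G).indicator (fun v => (iotaV G u v z) ^ 2))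
    hgm.aestronglyMeasurable
  rw [e1, e2, ← e3, hmap, integral_smul_measure]
  rw [ENNReal.toReal_ofReal (abs_nonneg _), abs_of_pos (by norm_num), smul_eq_mul]
  ring

lemma HS_integrable {φ : (G → ℝ) → ℝ} (hφ : Measurable φ) (C : ℝ)
    (hC : ∀ x ∈ simplexG G, |φ x| ≤ C) : Integrable φ (HS G) := by
  have := isFinite_HS G
  exact Integrable.of_bound hφ.aestronglyMeasurable C
    ((HS_ae G).mono fun x hx => by simpa using hC x hx)

lemma integrable_mul (z w : G) : Integrable (fun x : G → ℝ => x z * x w) (HS G) := by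
  refine HS_integrable G (by fun_prop) 1 fun x hx => ?_
  have a := hx.1 z
  have b := hx.1 w
  rw [abs_of_nonneg (mul_nonneg a b)]
  exact mul_le_one₀ (simplex_le_one G hx z) b (simplex_le_one G hx w)

lemma pair_moment (h3 : 3 ≤ Fintype.card G) (z w : G) :
    ∫ x, x z * x w ∂(HS G) = (∫ x, x z * x z ∂(HS G) + ∫ x, x w * x w ∂(HS G)) / 4 +
      if z = w then (∫ x, x z * x z ∂(HS G)) / 2 else 0 := by
  split_ifs with hzw
  · subst hzw; ring
  have i1 := pair_transform G h3 z w hzw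
  have i2 := pair_transform G h3 w z (Ne.symm hzw)
  have hInteg : Integrable (fun x : G → ℝ => (x z - x w) ^ 2) (HS G) := by
    have := ((integrable_mul G z z).add (integrable_mul G w w)).sub
      ((integrable_mul G z w).const_mul 2)
    refine this.congr (Filter.Eventually.of_forall fun x => ?_)
    simp only [Pi.sub_apply, Pi.add_apply]; ring
  have hmQ : MeasurableSet {x : G → ℝ | x w ≤ x z} :=
    measurableSet_le (measurable_pi_apply w) (measurable_pi_apply z)
  have hmQ' : MeasurableSet {x : G → ℝ | x z ≤ x w} :=
    measurableSet_le (measurable_pi_apply z) (measurable_pi_apply w)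
  have hadd := integral_add_compl hmQ hInteg
  have hc : ∫ x in {x : G → ℝ | x w ≤ x z}ᶜ, (x z - x w) ^ 2 ∂(HS G) =
      ∫ x in {x : G → ℝ | x z ≤ x w}, (x w - x z) ^ 2 ∂(HS G) := by
    rw [← integral_indicator hmQ.compl, ← integral_indicator hmQ']
    congr 1
    ext x
    simp only [Set.indicator_apply, Set.mem_compl_iff, Set.mem_ofPred_eq, not_le]
    rcases lt_trichotomy (x z) (x w) with h | h | h
    · rw [if_pos h, if_pos h.le]; ring
    · simp [h]
    · rw [if_neg (not_lt.2 h.le), if_neg (not_le.2 h)]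
  have hexp : ∫ x, (x z - x w) ^ 2 ∂(HS G) = ∫ x, x z * x z ∂(HS G) + ∫ x, x w * x w ∂(HS G)
      - 2 * ∫ x, x z * x w ∂(HS G) := by
    rw [← integral_const_mul, ← integral_add (integrable_mul G z z) (integrable_mul G w w)]
    have hh : Integrable (fun x : G → ℝ => x z * x z + x w * x w) (HS G) :=
      (integrable_mul G z z).add (integrable_mul G w w)
    rw [← integral_sub hh ((integrable_mul G z w).const_mul 2)]
    congr 1
    ext x
    ring
  simp only [pow_two] at i1 i2 hadd hc hexp
  rw [hc, hexp] at hadd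
  linarith

lemma second_moment (h3 : 3 ≤ Fintype.card G) (f : G → ℝ) (hf0 : ∑ g, f g = 0)
    (hf1 : ∀ g, |f g| ≤ 1) :
    ((Fintype.card G : ℝ) + 1) * ∫ x, (∑ g, f g * x g) ^ 2 ∂(HS G) ≤ (HS G).real Set.univ := by
  have := isFinite_HS G
  set b : G → ℝ := fun z => ∫ x, x z * x z ∂(HS G) with hb
  have hb0 : ∀ z, 0 ≤ b z := fun z => integral_nonneg fun x => mul_self_nonneg _
  have hgen : ∀ f : G → ℝ, ∫ x, (∑ g, f g * x g) ^ 2 ∂(HS G) =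
      (∑ g, f g) * (∑ g, f g * b g) / 2 + (∑ g, f g ^ 2 * b g) / 2 := by
    intro f
    have h1 : ∀ x : G → ℝ, (∑ g, f g * x g) ^ 2 =
        ∑ z, ∑ w, (f z * f w) * (x z * x w) := by
      intro x
      rw [pow_two, Finset.sum_mul_sum]
      refine Finset.sum_congr rfl fun z _ => Finset.sum_congr rfl fun w _ => by ring
    simp_rw [h1]
    rw [integral_finsetSum _ fun z _ => integrable_finsetSum _ fun w _ =>
      (integrable_mul G z w).const_mul _]
    have h2 : ∀ z, ∫ x, ∑ w, (f z * f w) * (x z * x w) ∂(HS G) =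
        f z * b z / 4 * (∑ w, f w) + f z / 4 * (∑ w, f w * b w) + f z ^ 2 * b z / 2 := by
      intro z
      rw [integral_finsetSum _ fun w _ => (integrable_mul G z w).const_mul _]
      have h4 : ∀ w, ∫ x, (f z * f w) * (x z * x w) ∂(HS G) =
          (f z * f w) * ((b z + b w) / 4) + (f z * f w) * (if z = w then b z / 2 else 0) := by
        intro w
        rw [integral_const_mul, pair_moment G h3 z w, mul_add]
      simp_rw [h4]
      rw [Finset.sum_add_distrib]
      congr 1
      · rw [Finset.mul_sum, Finset.mul_sum, ← Finset.sum_add_distrib]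
        refine Finset.sum_congr rfl fun w _ => ?_
        ring
      · simp; ring
    simp_rw [h2, Finset.sum_add_distrib, ← Finset.sum_mul, ← Finset.sum_div]
    ring
  have hone := hgen (fun _ => 1)
  have hone' : ∫ x : G → ℝ, (∑ g, (1 : ℝ) * x g) ^ 2 ∂(HS G) = (HS G).real Set.univ := by
    rw [integral_congr_ae (g := fun _ => (1 : ℝ))
      ((HS_ae G).mono fun x hx => by simp [hx.2])]
    simp
  rw [hone'] at hone
  simp only [Finset.sum_const, Finset.card_univ, nsmul_eq_mul, mul_one, one_mul, one_pow] at hone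
  rw [hgen f, hf0, hone]
  have : ∑ g, f g ^ 2 * b g ≤ ∑ g, b g := by
    refine Finset.sum_le_sum fun g _ => ?_
    have : f g ^ 2 ≤ 1 := by rw [sq_le_one_iff_abs_le_one]; exact hf1 g
    nlinarith [hb0 g]
  have hn : (0 : ℝ) ≤ Fintype.card G := Nat.cast_nonneg _
  nlinarith

lemma UG_tail (h3 : 3 ≤ Fintype.card G) (f : G → ℝ) (hf0 : ∑ g, f g = 0)
    (hf1 : ∀ g, |f g| ≤ 1) (a : ℝ) (ha : 0 < a) :
    (UG G {x | a < ∑ g, f g * x g}).toReal ≤ 1 / (a ^ 2 * ((Fintype.card G : ℝ) + 1)) := by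
  have := isFinite_HS G
  have hUG : UG G = (HS G Set.univ)⁻¹ • HS G := by
    simp [UG, HS]
  have hn : (0 : ℝ) ≤ Fintype.card G := Nat.cast_nonneg _
  have hsm := second_moment G h3 f hf0 hf1
  have hF : ∀ x ∈ simplexG G, |∑ g, f g * x g| ≤ 1 := by
    intro x hx
    calc |∑ g, f g * x g| ≤ ∑ g, |f g * x g| := Finset.abs_sum_le_sum_abs _ _
      _ ≤ ∑ g, x g := by
        refine Finset.sum_le_sum fun g _ => ?_
        rw [abs_mul, abs_of_nonneg (hx.1 g)]
        exact mul_le_of_le_one_left (hx.1 g) (hf1 g)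
      _ = 1 := hx.2
  have hInteg : Integrable (fun x : G → ℝ => (∑ g, f g * x g) ^ 2) (HS G) := by
    refine HS_integrable G (by fun_prop) 1 fun x hx => ?_
    rw [abs_pow]
    exact pow_le_one₀ (abs_nonneg _) (hF x hx)
  have hmk := mul_meas_ge_le_integral_of_nonneg (μ := HS G)
    (Filter.Eventually.of_forall fun x => sq_nonneg (∑ g, f g * x g)) hInteg (a ^ 2)
  have hsub : (HS G).real {x | a < ∑ g, f g * x g} ≤
      (HS G).real {x | a ^ 2 ≤ (∑ g, f g * x g) ^ 2} := by
    refine measureReal_mono ?_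
    intro x hx
    simp only [Set.mem_ofPred_eq] at hx ⊢
    exact pow_le_pow_left₀ ha.le hx.le 2
  rw [hUG, Measure.smul_apply, smul_eq_mul, ENNReal.toReal_mul, ENNReal.toReal_inv]
  change ((HS G).real Set.univ)⁻¹ * (HS G).real _ ≤ _
  have hH0 : 0 ≤ (HS G).real Set.univ := measureReal_nonneg
  have hpos : 0 < a ^ 2 * ((Fintype.card G : ℝ) + 1) := by positivity
  rcases hH0.eq_or_lt with h | h
  · rw [← h]; simp; positivity
  rw [inv_mul_le_iff₀ h, mul_one_div, le_div_iff₀ hpos]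
  nlinarith [mul_le_mul_of_nonneg_left hsub (sq_nonneg a)]

lemma Khat_apply (R : Finset G) (hid : (1 : G) ∉ R) (f : G → ℝ) (g : G) :
    ∑ h, KhatM G R g h * f h = (1 - 2 / (Fintype.card G : ℝ)) * f g +
      2 / ((Fintype.card G : ℝ) * R.card) * ∑ r ∈ R, f (g * r) := by
  have h1 : ∑ h, KhatM G R g h * f h = ∑ r, KhatM G R g (g * r) * f (g * r) :=
    (Equiv.sum_comp (Equiv.mulLeft g) (fun h => KhatM G R g h * f h)).symm
  rw [h1]
  have h2 : ∀ r, KhatM G R g (g * r) * f (g * r) =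
      (if r = 1 then (1 - 2 / (Fintype.card G : ℝ)) * f g else 0) +
      (if r ∈ R then 2 / ((Fintype.card G : ℝ) * R.card) * f (g * r) else 0) := by
    intro r
    by_cases hr : r = 1
    · subst hr; simp [KhatM, hid]
    · simp only [KhatM]
      rw [if_neg (by simpa using fun h => hr h), if_neg hr, inv_mul_cancel_left]
      split_ifs <;> simp
  simp_rw [h2, Finset.sum_add_distrib, Finset.mul_sum]
  congr 1
  · simp
  · simp

lemma Khat_symm (R : Finset G) (hsym : ∀ r ∈ R, r⁻¹ ∈ R) (g h : G) :
    KhatM G R g h = KhatM G R h g := by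
  unfold KhatM
  have e1 : (g = h) ↔ (h = g) := eq_comm
  have e2 : g⁻¹ * h ∈ R ↔ h⁻¹ * g ∈ R := by
    constructor
    · intro hh; simpa using hsym _ hh
    · intro hh; simpa using hsym _ hh
  simp only [e1, e2]

lemma exists_eigen (R : Finset G) (hsym : ∀ r ∈ R, r⁻¹ ∈ R) (hid : (1 : G) ∉ R)
    (hne : R.Nonempty) :
    ∃ f : G → ℝ, ∑ g, f g = 0 ∧ (∀ g, |f g| ≤ 1) ∧ (∃ z, f z = 1) ∧
      ∀ g, ∑ h, KhatM G R g h * f h = (1 - gapHat G R) * f g := by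
  set Q : (G → ℝ) → (G → ℝ) → ℝ := fun v w => ∑ g, ∑ h, v g * KhatM G R g h * w h with hQ
  have hn0 : (Fintype.card G : ℝ) ≠ 0 := by positivity
  have hm0 : (R.card : ℝ) ≠ 0 := by
    have := hne.card_pos
    positivity
  -- the sphere
  set S : Set (G → ℝ) := {v | ∑ g, v g = 0 ∧ ∑ g, (v g) ^ 2 = 1} with hS
  have hSc : IsCompact S := by
    apply Metric.isCompact_of_isClosed_isBounded
    · exact (isClosed_eq (by fun_prop) continuous_const).inter
        (isClosed_eq (by fun_prop) continuous_const)
    · refine (Metric.isBounded_closedBall (x := (0 : G → ℝ)) (r := 1)).subset ?_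
      intro v hv
      rw [mem_closedBall_zero_iff, pi_norm_le_iff_of_nonneg (by norm_num)]
      intro g
      rw [Real.norm_eq_abs, ← sq_le_one_iff_abs_le_one, ← hv.2]
      exact Finset.single_le_sum (f := fun g => v g ^ 2) (fun i _ => sq_nonneg _)
        (Finset.mem_univ g)
  have hSn : S.Nonempty := by
    obtain ⟨r, hr⟩ := hne
    have hr1 : r ≠ 1 := by rintro rfl; exact hid hr
    refine ⟨fun g => (Real.sqrt 2)⁻¹ * ((if g = 1 then 1 else 0) - (if g = r then 1 else 0)),
      ?_, ?_⟩
    · rw [← Finset.mul_sum, Finset.sum_sub_distrib]; simp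
    · simp_rw [mul_pow]
      rw [← Finset.mul_sum]
      have : ∀ g : G, (((if g = 1 then 1 else 0) - (if g = r then 1 else 0) : ℝ)) ^ 2 =
          (if g = 1 then 1 else 0) + (if g = r then 1 else 0) := by
        intro g
        by_cases h1 : g = 1
        · subst h1; simp [hr1.symm]
        · simp [h1]
      simp_rw [this, Finset.sum_add_distrib]
      simp
      norm_num
  have hQc : Continuous fun v => Q v v := by
    simp only [hQ]; fun_prop
  obtain ⟨v, hvS, hvmax⟩ := hSc.exists_isMaxOn hSn hQc.continuousOn
  have hgap : 1 - gapHat G R = Q v v := by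
    unfold gapHat
    rw [sub_sub_cancel]
    have hg : IsGreatest {lam : ℝ | ∃ v : G → ℝ, ∑ g, v g = 0 ∧ ∑ g, (v g) ^ 2 = 1 ∧
        lam = ∑ g, ∑ h, v g * KhatM G R g h * v h} (Q v v) := by
      constructor
      · exact ⟨v, hvS.1, hvS.2, rfl⟩
      · rintro _ ⟨w, hw1, hw2, rfl⟩
        exact hvmax (a := w) ⟨hw1, hw2⟩
    exact hg.csSup_eq
  set lam := Q v v with hlam
  have Qadd : ∀ a b c, Q a (b + c) = Q a b + Q a c := by
    intro a b c
    simp only [hQ, Pi.add_apply, mul_add, Finset.sum_add_distrib]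
  have Qsmul : ∀ a b (t : ℝ), Q a (t • b) = t * Q a b := by
    intro a b t
    simp only [hQ, Pi.smul_apply, smul_eq_mul, Finset.mul_sum]
    refine Finset.sum_congr rfl fun _ _ => Finset.sum_congr rfl fun _ _ => by ring
  have Qsymm : ∀ a b, Q a b = Q b a := by
    intro a b
    simp only [hQ]
    rw [Finset.sum_comm]
    refine Finset.sum_congr rfl fun x _ => Finset.sum_congr rfl fun y _ => ?_
    rw [Khat_symm G R hsym y x]; ring
  have hle : ∀ w : G → ℝ, ∑ g, w g = 0 → Q w w ≤ lam * ∑ g, w g ^ 2 := by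
    intro w hw
    have h0 : 0 ≤ ∑ g, w g ^ 2 := Finset.sum_nonneg fun _ _ => sq_nonneg _
    rcases h0.eq_or_lt with h | h
    · have : w = 0 := by
        funext g
        have := (Finset.sum_eq_zero_iff_of_nonneg fun _ _ => sq_nonneg _).1 h.symm g
          (Finset.mem_univ g)
        simpa using this
      subst this
      simp [hQ]
    · set s := Real.sqrt (∑ g, w g ^ 2) with hs
      have hs0 : 0 < s := Real.sqrt_pos.2 h
      have hss : s * s = ∑ g, w g ^ 2 := Real.mul_self_sqrt h0
      have := hvmax (a := s⁻¹ • w) ⟨by simp [← Finset.mul_sum, hw], by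
        simp only [Pi.smul_apply, smul_eq_mul, mul_pow]
        rw [← Finset.mul_sum, ← hss]; field_simp⟩
      simp only [Set.mem_ofPred_eq] at this
      rw [Qsmul, Qsymm, Qsmul] at this
      rw [← hss]
      have h3 : Q w w = s * s * (s⁻¹ * (s⁻¹ * Q w w)) := by field_simp
      rw [h3, mul_comm lam]
      exact mul_le_mul_of_nonneg_left this (by positivity)
  set w : G → ℝ := fun g => lam * v g - ∑ h, KhatM G R g h * v h with hw
  have hw0 : ∑ g, w g = 0 := by
    simp only [hw, Finset.sum_sub_distrib, ← Finset.mul_sum, hvS.1]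
    rw [Finset.sum_comm]
    have : ∀ h, ∑ g, KhatM G R h g * v h = v h := by
      intro h
      have := Khat_apply G R hid (fun _ => 1) h
      rw [← Finset.sum_mul]
      simp only [mul_one, Finset.sum_const, nsmul_eq_mul] at this
      rw [this]
      field_simp
      ring
    have h5 : ∀ h, ∑ g, KhatM G R g h * v h = v h := by
      intro h
      exact (Finset.sum_congr rfl fun g _ => by rw [Khat_symm G R hsym]).trans (this h)
    simp_rw [h5, hvS.1]
    simp
  have hwQ : Q w v = lam * ∑ g, w g * v g - ∑ g, w g ^ 2 := by
    simp only [hQ]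
    rw [Finset.mul_sum, ← Finset.sum_sub_distrib]
    refine Finset.sum_congr rfl fun g _ => ?_
    have : ∑ h, w g * KhatM G R g h * v h = w g * ∑ h, KhatM G R g h * v h := by
      rw [Finset.mul_sum]; exact Finset.sum_congr rfl fun _ _ => by ring
    rw [this]
    have : ∑ h, KhatM G R g h * v h = lam * v g - w g := by simp [hw]
    rw [this]; ring
  have hquad : ∀ t : ℝ, 0 ≤ (lam * (∑ g, w g ^ 2) - Q w w) * (t * t) +
      (2 * ∑ g, w g ^ 2) * t + 0 := by
    intro t
    have h := hle (v + t • w) (by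
      simp [Finset.sum_add_distrib, ← Finset.mul_sum, hvS.1, hw0])
    have e1 : ∑ g, (v + t • w) g ^ 2 = 1 + 2 * t * (∑ g, w g * v g) + t * t * ∑ g, w g ^ 2 := by
      rw [← hvS.2, Finset.mul_sum, Finset.mul_sum, ← Finset.sum_add_distrib,
        ← Finset.sum_add_distrib]
      refine Finset.sum_congr rfl fun g _ => ?_
      simp only [Pi.add_apply, Pi.smul_apply, smul_eq_mul]; ring
    have e2 : Q (v + t • w) (v + t • w) = lam + 2 * t * Q w v + t * t * Q w w := by
      rw [Qadd, Qsmul, Qsymm _ v, Qsymm _ w, Qadd, Qadd, Qsmul, Qsmul, Qsymm v w]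
      ring
    rw [e1, e2, hwQ] at h
    nlinarith
  have hdisc := discrim_le_zero hquad
  have hzero : ∑ g, w g ^ 2 = 0 := by
    unfold discrim at hdisc
    nlinarith
  have heig : ∀ g, ∑ h, KhatM G R g h * v h = lam * v g := by
    intro g
    have := (Finset.sum_eq_zero_iff_of_nonneg fun _ _ => sq_nonneg _).1 hzero g
      (Finset.mem_univ g)
    have h6 : w g = 0 := by simpa using this
    simp only [hw] at h6
    linarith
  -- normalize
  obtain ⟨z, -, hz⟩ := Finset.exists_max_image (Finset.univ : Finset G) (fun g => |v g|)
    ⟨1, Finset.mem_univ _⟩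
  have hvz : v z ≠ 0 := by
    intro h
    have : ∀ g, v g = 0 := by
      intro g
      have := hz g (Finset.mem_univ g)
      rw [h, abs_zero] at this
      exact abs_nonpos_iff.1 this
    have h1 := hvS.2
    simp [this] at h1
  refine ⟨fun g => v g / v z, ?_, ?_, ⟨z, div_self hvz⟩, ?_⟩
  · rw [← Finset.sum_div, hvS.1, zero_div]
  · intro g
    rw [abs_div]
    exact div_le_one_of_le₀ (hz g (Finset.mem_univ g)) (abs_nonneg _)
  · intro g
    rw [hgap, ← mul_div_assoc, ← heig g, Finset.sum_div]
    exact Finset.sum_congr rfl fun _ _ => by ring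

lemma gap_le (R : Finset G) (hid : (1 : G) ∉ R) (hne : R.Nonempty) (f : G → ℝ)
    (hf1 : ∀ g, |f g| ≤ 1) (z : G) (hz : f z = 1)
    (heig : ∀ g, ∑ h, KhatM G R g h * f h = (1 - gapHat G R) * f g) :
    gapHat G R ≤ 4 / (Fintype.card G : ℝ) := by
  have h := heig z
  rw [Khat_apply G R hid, hz] at h
  have hm0 : (0 : ℝ) < R.card := by exact_mod_cast hne.card_pos
  have hn0 : (0 : ℝ) < Fintype.card G := by exact_mod_cast Fintype.card_pos
  have h1 : -(R.card : ℝ) ≤ ∑ r ∈ R, f (z * r) := by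
    have : ∑ r ∈ R, (-1 : ℝ) ≤ ∑ r ∈ R, f (z * r) :=
      Finset.sum_le_sum fun r _ => (abs_le.1 (hf1 _)).1
    simpa using this
  have h2 := mul_le_mul_of_nonneg_left h1
    (show 0 ≤ 2 / ((Fintype.card G : ℝ) * R.card) by positivity)
  have h3 : 2 / ((Fintype.card G : ℝ) * R.card) * -(R.card : ℝ) = - (2 / (Fintype.card G : ℝ)) := by
    field_simp
  have h4 : 4 / (Fintype.card G : ℝ) = 2 * (2 / (Fintype.card G : ℝ)) := by ring
  rw [h4]
  linarith

lemma isProb_unifOn {α : Type*} [MeasurableSpace α] (s : Finset α) (hs : s.Nonempty) :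
    IsProbabilityMeasure (unifOn s) := by
  constructor
  have h0 : (s.card : ENNReal) ≠ 0 := by simpa using hs.ne_empty
  simp only [unifOn, Measure.smul_apply, Measure.finsetSum_apply, measure_univ,
    Finset.sum_const, nsmul_eq_mul, mul_one, smul_eq_mul]
  exact ENNReal.inv_mul_cancel h0 (ENNReal.natCast_ne_top _)

lemma integral_unifOn (s : Finset G) (φ : G → ℝ) :
    ∫ a, φ a ∂(unifOn s) = (s.card : ℝ)⁻¹ * ∑ a ∈ s, φ a := by
  unfold unifOn
  rw [integral_smul_measure, integral_finsetSum_measure fun a _ => integrable_dirac (by simp)]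
  simp

lemma ae_unifOn (s : Finset G) : ∀ᵐ a ∂(unifOn s), a ∈ s := by
  rw [ae_iff]
  simp only [unifOn, Measure.smul_apply, Measure.finsetSum_apply, smul_eq_mul]
  rw [Finset.sum_eq_zero, mul_zero]
  intro a ha
  rw [Measure.dirac_apply' _ (MeasurableSet.of_discrete)]
  simp [ha]

lemma isProb_unit : IsProbabilityMeasure ((volume : Measure ℝ).restrict (Set.Icc 0 1)) := by
  constructor
  simp

/-- The law of `(r, λ)`. -/
def driveIn (R : Finset G) : Measure (G × ℝ) :=
  (unifOn R).prod ((volume : Measure ℝ).restrict (Set.Icc 0 1))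

lemma isProb_driveIn (R : Finset G) (hne : R.Nonempty) : IsProbabilityMeasure (driveIn G R) := by
  have := isProb_unifOn R hne
  have := isProb_unit
  unfold driveIn
  infer_instance

lemma isProb_driveG (R : Finset G) (hne : R.Nonempty) : IsProbabilityMeasure (driveG G R) := by
  have := isProb_driveIn G R hne
  have := isProb_unifOn (Finset.univ : Finset G) ⟨1, Finset.mem_univ _⟩
  change IsProbabilityMeasure ((unifOn (Finset.univ : Finset G)).prod (driveIn G R))
  infer_instance

lemma ae_driveIn (R : Finset G) (hne : R.Nonempty) :
    ∀ᵐ q ∂(driveIn G R), q.1 ∈ R ∧ q.2 ∈ Set.Icc (0 : ℝ) 1 := by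
  have := isProb_unifOn R hne
  have := isProb_unit
  have h1 : ∀ᵐ q ∂(driveIn G R), q.1 ∈ R :=
    Measure.quasiMeasurePreserving_fst.ae (ae_unifOn G R)
  have h2 : ∀ᵐ q ∂(driveIn G R), q.2 ∈ Set.Icc (0 : ℝ) 1 :=
    Measure.quasiMeasurePreserving_snd.ae (ae_restrict_mem measurableSet_Icc)
  exact h1.and h2

lemma ae_driveG (R : Finset G) (hne : R.Nonempty) :
    ∀ᵐ u ∂(driveG G R), u.2.1 ∈ R ∧ u.2.2 ∈ Set.Icc (0 : ℝ) 1 := by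
  have := isProb_driveIn G R hne
  have := isProb_unifOn (Finset.univ : Finset G) ⟨1, Finset.mem_univ _⟩
  exact (Measure.quasiMeasurePreserving_snd (μ := unifOn (Finset.univ : Finset G))
    (ν := driveIn G R)).ae (ae_driveIn G R hne)

lemma measurable_eval {α : Type*} [MeasurableSpace α] {x : α → G → ℝ} {κ : α → G}
    (hx : Measurable x) (hκ : Measurable κ) : Measurable fun a => x a (κ a) := by
  have : (fun a => x a (κ a)) = fun a => ∑ g, if κ a = g then x a g else 0 := by
    funext a; simp
  rw [this]
  refine Finset.measurable_sum _ fun g _ => Measurable.ite ?_ ?_ measurable_const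
  · exact hκ (measurableSet_singleton g)
  · exact (measurable_pi_apply g).comp hx

lemma measurable_step {α : Type*} [MeasurableSpace α] {x : α → G → ℝ} {κ : α → G × G × ℝ}
    (hx : Measurable x) (hκ : Measurable κ) : Measurable fun a => gibbsStepG G (x a) (κ a) := by
  have h1 : Measurable fun a => (κ a).1 := measurable_fst.comp hκ
  have h2 : Measurable fun a => (κ a).2.1 := (measurable_fst.comp measurable_snd).comp hκ
  have h3 : Measurable fun a => (κ a).2.2 := (measurable_snd.comp measurable_snd).comp hκ
  have h4 : Measurable fun a => (κ a).1 * (κ a).2.1 :=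
    (Measurable.of_discrete (f := fun q : G × G => q.1 * q.2)).comp (h1.prodMk h2)
  have h5 := measurable_eval G hx h1
  have h6 := measurable_eval G hx h4
  rw [measurable_pi_iff]
  intro h
  unfold gibbsStepG
  refine Measurable.ite ?_ (h3.mul (h5.add h6)) (Measurable.ite ?_
    ((measurable_const.sub h3).mul (h5.add h6)) ((measurable_pi_apply h).comp hx))
  · have : {a | h = (κ a).1} = (fun a => (κ a).1) ⁻¹' {h} := by ext a; simp [eq_comm]
    rw [this]
    exact h1 (measurableSet_singleton h)
  · have : {a | h = (κ a).1 * (κ a).2.1} = (fun a => (κ a).1 * (κ a).2.1) ⁻¹' {h} := by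
      ext a; simp [eq_comm]
    rw [this]
    exact h4 (measurableSet_singleton h)

/-- The trajectory map. -/
def traj (T : ℕ) (x : G → ℝ) (ω : Fin T → G × G × ℝ) : G → ℝ :=
  (List.ofFn ω).foldl (gibbsStepG G) x

lemma traj_zero (x : G → ℝ) (ω : Fin 0 → G × G × ℝ) : traj G 0 x ω = x := by
  simp [traj]

lemma traj_succ (T : ℕ) (x : G → ℝ) (ω : Fin (T + 1) → G × G × ℝ) :
    traj G (T + 1) x ω = traj G T (gibbsStepG G x (ω 0)) (fun i => ω i.succ) := by
  simp [traj, List.ofFn_succ]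

lemma measurable_traj (T : ℕ) : ∀ {α : Type _} [MeasurableSpace α] {x : α → G → ℝ}
    {κ : α → Fin T → G × G × ℝ} (_ : Measurable x) (_ : Measurable κ),
    Measurable fun a => traj G T (x a) (κ a) := by
  induction T with
  | zero => intro α _ x κ hx _; simpa only [traj_zero] using hx
  | succ T ih =>
    intro α _ x κ hx hκ
    simp only [traj_succ]
    refine ih (measurable_step G hx ((measurable_pi_apply 0).comp hκ)) ?_
    exact measurable_pi_iff.2 fun i => (measurable_pi_apply i.succ).comp hκ

lemma step_pairing (f x : G → ℝ) (u : G × G × ℝ) (hr : u.2.1 ≠ 1) :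
    ∑ h, f h * gibbsStepG G x u h = ∑ h, f h * x h +
      f u.1 * (u.2.2 * (x u.1 + x (u.1 * u.2.1)) - x u.1) +
      f (u.1 * u.2.1) * ((1 - u.2.2) * (x u.1 + x (u.1 * u.2.1)) - x (u.1 * u.2.1)) := by
  have hne : u.1 * u.2.1 ≠ u.1 := by simpa using hr
  have : ∀ h, f h * gibbsStepG G x u h = f h * x h +
      (if h = u.1 then f u.1 * (u.2.2 * (x u.1 + x (u.1 * u.2.1)) - x u.1) else 0) +
      (if h = u.1 * u.2.1 then f (u.1 * u.2.1) * ((1 - u.2.2) * (x u.1 + x (u.1 * u.2.1))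
        - x (u.1 * u.2.1)) else 0) := by
    intro h
    unfold gibbsStepG
    by_cases h1 : h = u.1
    · rw [if_pos h1, if_pos h1, if_neg (by rw [h1]; exact hne.symm), h1]; ring
    · by_cases h2 : h = u.1 * u.2.1
      · rw [if_neg h1, if_pos h2, if_neg h1, if_pos h2, h2]; ring
      · simp [h1, h2]
  simp_rw [this, Finset.sum_add_distrib]
  simp

lemma step_mem (x : G → ℝ) (hx : x ∈ simplexG G) (u : G × G × ℝ) (hr : u.2.1 ≠ 1)
    (hl : u.2.2 ∈ Set.Icc (0 : ℝ) 1) : gibbsStepG G x u ∈ simplexG G := by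
  constructor
  · intro h
    have h1 := hx.1 u.1
    have h2 := hx.1 (u.1 * u.2.1)
    have h3 := hx.1 h
    unfold gibbsStepG
    split_ifs
    · exact mul_nonneg hl.1 (by linarith)
    · exact mul_nonneg (by linarith [hl.2]) (by linarith)
    · exact h3
  · have := step_pairing G (fun _ => 1) x u hr
    simp only [one_mul] at this
    rw [this, hx.2]; ring

lemma traj_mem (R : Finset G) (hid : (1 : G) ∉ R) (T : ℕ) : ∀ (x : G → ℝ) (_ : x ∈ simplexG G)
    (ω : Fin T → G × G × ℝ) (_ : ∀ i, (ω i).2.1 ∈ R ∧ (ω i).2.2 ∈ Set.Icc (0 : ℝ) 1),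
    traj G T x ω ∈ simplexG G := by
  induction T with
  | zero => intro x hx ω _; rwa [traj_zero]
  | succ T ih =>
    intro x hx ω hω
    rw [traj_succ]
    refine ih _ (step_mem G x hx _ ?_ (hω 0).2) _ fun i => hω i.succ
    intro h
    exact hid (h ▸ (hω 0).1)

lemma traj_ae (R : Finset G) (hid : (1 : G) ∉ R) (hne : R.Nonempty) (T : ℕ) (x : G → ℝ)
    (hx : x ∈ simplexG G) :
    ∀ᵐ ω ∂(Measure.pi fun _ : Fin T => driveG G R), traj G T x ω ∈ simplexG G := by
  have := isProb_driveG G R hne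
  have h : ∀ᵐ ω ∂(Measure.pi fun _ : Fin T => driveG G R),
      ∀ i, (ω i).2.1 ∈ R ∧ (ω i).2.2 ∈ Set.Icc (0 : ℝ) 1 :=
    Filter.eventually_all.2 fun i =>
      (Measure.tendsto_eval_ae_ae (μ := fun _ : Fin T => driveG G R) (i := i)).eventually
        (ae_driveG G R hne)
  exact h.mono fun ω hω => traj_mem G R hid T x hx ω hω

lemma pairing_bound (f : G → ℝ) (hf1 : ∀ g, |f g| ≤ 1) (x : G → ℝ) (hx : x ∈ simplexG G) :
    |∑ g, f g * x g| ≤ 1 := by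
  calc |∑ g, f g * x g| ≤ ∑ g, |f g * x g| := Finset.abs_sum_le_sum_abs _ _
    _ ≤ ∑ g, x g := by
      refine Finset.sum_le_sum fun g _ => ?_
      rw [abs_mul, abs_of_nonneg (hx.1 g)]
      exact mul_le_of_le_one_left (hx.1 g) (hf1 g)
    _ = 1 := hx.2

lemma measurable_pairing (f : G → ℝ) : Measurable fun x : G → ℝ => ∑ g, f g * x g := by
  fun_prop

lemma step_expect (R : Finset G) (hsym : ∀ r ∈ R, r⁻¹ ∈ R) (hid : (1 : G) ∉ R)
    (hne : R.Nonempty) (f : G → ℝ) (hf1 : ∀ g, |f g| ≤ 1)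
    (heig : ∀ g, ∑ h, KhatM G R g h * f h = (1 - gapHat G R) * f g)
    (x : G → ℝ) (hx : x ∈ simplexG G) :
    ∫ u, ∑ h, f h * gibbsStepG G x u h ∂(driveG G R) =
      (1 - gapHat G R / 2) * ∑ h, f h * x h := by
  have i1 := isProb_driveIn G R hne
  have i2 := isProb_unifOn (Finset.univ : Finset G) ⟨1, Finset.mem_univ _⟩
  have i3 := isProb_unifOn R hne
  have i4 := isProb_unit
  have hm0 : (R.card : ℝ) ≠ 0 := by exact_mod_cast hne.card_pos.ne'
  have hn0 : (Fintype.card G : ℝ) ≠ 0 := by exact_mod_cast Fintype.card_pos.ne'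
  have hr1 : ∀ r ∈ R, r ≠ 1 := by rintro r hr rfl; exact hid hr
  have hmeas : Measurable fun u => ∑ h, f h * gibbsStepG G x u h :=
    (measurable_pairing G f).comp (measurable_step G measurable_const measurable_id)
  have hInteg : Integrable (fun u => ∑ h, f h * gibbsStepG G x u h) (driveG G R) := by
    have := isProb_driveG G R hne
    refine Integrable.of_bound hmeas.aestronglyMeasurable 1 ?_
    refine (ae_driveG G R hne).mono fun u hu => ?_
    exact pairing_bound G f hf1 _ (step_mem G x hx u (hr1 _ hu.1) hu.2)
  have hInteg2 : ∀ g, Integrable (fun q : G × ℝ => ∑ h, f h * gibbsStepG G x (g, q) h)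
      (driveIn G R) := by
    intro g
    refine Integrable.of_bound (hmeas.comp (by fun_prop :
      Measurable fun q : G × ℝ => (g, q))).aestronglyMeasurable 1 ?_
    refine (ae_driveIn G R hne).mono fun q hq => ?_
    exact pairing_bound G f hf1 _ (step_mem G x hx (g, q) (hr1 _ hq.1) hq.2)
  have hlam : ∀ g, ∀ r ∈ R, ∫ l, ∑ h, f h * gibbsStepG G x (g, r, l) h
      ∂((volume : Measure ℝ).restrict (Set.Icc 0 1)) =
      ∑ h, f h * x h - (f g - f (g * r)) * (x g - x (g * r)) / 2 := by
    intro g r hr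
    have e : ∀ l : ℝ, ∑ h, f h * gibbsStepG G x (g, r, l) h =
        (∑ h, f h * x h - f g * x g + f (g * r) * x g) +
          ((f g - f (g * r)) * (x g + x (g * r))) * l := by
      intro l
      rw [step_pairing G f x (g, r, l) (hr1 r hr)]
      simp only
      ring
    simp_rw [e]
    rw [integral_Icc_eq_integral_Ioc, ← intervalIntegral.integral_of_le zero_le_one,
      intervalIntegral.integral_add (by simp) (by
        apply Continuous.intervalIntegrable; fun_prop),
      intervalIntegral.integral_const, intervalIntegral.integral_const_mul, integral_id]
    simp
    ring
  have hfull : ∫ u, ∑ h, f h * gibbsStepG G x u h ∂(driveG G R) =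
      (Fintype.card G : ℝ)⁻¹ * ∑ g, (R.card : ℝ)⁻¹ * ∑ r ∈ R,
        (∑ h, f h * x h - (f g - f (g * r)) * (x g - x (g * r)) / 2) := by
    change ∫ u, ∑ h, f h * gibbsStepG G x u h
      ∂((unifOn (Finset.univ : Finset G)).prod (driveIn G R)) = _
    have hInteg' : Integrable (fun u => ∑ h, f h * gibbsStepG G x u h)
      ((unifOn (Finset.univ : Finset G)).prod (driveIn G R)) := hInteg
    rw [integral_prod _ hInteg', integral_unifOn, Finset.card_univ]
    congr 1
    refine Finset.sum_congr rfl fun g _ => ?_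
    unfold driveIn
    rw [integral_prod _ (hInteg2 g), integral_unifOn]
    congr 1
    exact Finset.sum_congr rfl fun r hr => hlam g r hr
  rw [hfull]
  -- algebra
  have hA : ∑ g, ∑ r ∈ R, (f g - f (g * r)) * (x g - x (g * r)) =
      2 * ∑ g, ∑ r ∈ R, (f g - f (g * r)) * x g := by
    have hB : ∑ g, ∑ r ∈ R, (f g - f (g * r)) * x (g * r) =
        - ∑ g, ∑ r ∈ R, (f g - f (g * r)) * x g := by
      rw [Finset.sum_comm]
      have hcm : ∑ g, ∑ r ∈ R, (f g - f (g * r)) * x g =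
        ∑ r ∈ R, ∑ g, (f g - f (g * r)) * x g := Finset.sum_comm
      rw [hcm, ← Finset.sum_neg_distrib]
      refine Finset.sum_bij (fun r _ => r⁻¹) (fun r hr => hsym r hr) (fun a _ b _ h => inv_inj.1 h)
        (fun r hr => ⟨r⁻¹, hsym r hr, inv_inv r⟩) ?_
      intro r hr
      rw [← Finset.sum_neg_distrib]
      rw [← Equiv.sum_comp (Equiv.mulRight r)
        (fun g => -((f g - f (g * r⁻¹)) * x g))]
      refine Finset.sum_congr rfl fun g _ => ?_
      simp only [Equiv.coe_mulRight, mul_inv_cancel_right]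
      ring
    have : ∀ g, ∑ r ∈ R, (f g - f (g * r)) * (x g - x (g * r)) =
        ∑ r ∈ R, (f g - f (g * r)) * x g - ∑ r ∈ R, (f g - f (g * r)) * x (g * r) := by
      intro g
      rw [← Finset.sum_sub_distrib]
      exact Finset.sum_congr rfl fun r _ => by ring
    simp_rw [this]
    rw [Finset.sum_sub_distrib, hB]; ring
  have hC : ∀ g, ∑ r ∈ R, (f g - f (g * r)) * x g =
      (Fintype.card G : ℝ) * R.card / 2 * (gapHat G R * (f g * x g)) := by
    intro g
    have h := heig g
    rw [Khat_apply G R hid] at h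
    rw [← Finset.sum_mul, Finset.sum_sub_distrib, Finset.sum_const, nsmul_eq_mul]
    have h' : gapHat G R * f g = 2 / (Fintype.card G : ℝ) * f g -
        2 / ((Fintype.card G : ℝ) * R.card) * ∑ r ∈ R, f (g * r) := by linarith
    have h'' : gapHat G R * (f g * x g) = (gapHat G R * f g) * x g := by ring
    rw [h'', h']
    field_simp
  have hD : ∑ g : G, (R.card : ℝ)⁻¹ * ∑ r ∈ R,
        (∑ h, f h * x h - (f g - f (g * r)) * (x g - x (g * r)) / 2) =
      (R.card : ℝ)⁻¹ * (Fintype.card G * (R.card * ∑ h, f h * x h) -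
        (∑ g, ∑ r ∈ R, (f g - f (g * r)) * (x g - x (g * r))) / 2) := by
    rw [← Finset.mul_sum]
    simp_rw [Finset.sum_sub_distrib, Finset.sum_const, nsmul_eq_mul, ← Finset.sum_div]
    rw [Finset.card_univ]
  rw [hD, hA]
  simp_rw [hC, ← Finset.mul_sum]
  field_simp

lemma traj_expect (R : Finset G) (hsym : ∀ r ∈ R, r⁻¹ ∈ R) (hid : (1 : G) ∉ R)
    (hne : R.Nonempty) (f : G → ℝ) (hf1 : ∀ g, |f g| ≤ 1)
    (heig : ∀ g, ∑ h, KhatM G R g h * f h = (1 - gapHat G R) * f g) (T : ℕ) :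
    ∀ (x : G → ℝ) (_ : x ∈ simplexG G),
    ∫ ω, ∑ h, f h * traj G T x ω h ∂(Measure.pi fun _ : Fin T => driveG G R) =
      (1 - gapHat G R / 2) ^ T * ∑ h, f h * x h := by
  have i1 := isProb_driveG G R hne
  have hr1 : ∀ r ∈ R, r ≠ 1 := by rintro r hr rfl; exact hid hr
  induction T with
  | zero => intro x hx; simp [traj_zero]
  | succ T ih =>
    intro x hx
    have hmp := (measurePreserving_piFinSuccAbove (fun _ : Fin (T + 1) => driveG G R) 0)
    have hmt : Measurable fun ω => ∑ h, f h * traj G (T + 1) x ω h :=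
      (measurable_pairing G f).comp (measurable_traj G (T + 1) measurable_const measurable_id)
    have hInteg : Integrable (fun ω => ∑ h, f h * traj G (T + 1) x ω h)
        (Measure.pi fun _ : Fin (T + 1) => driveG G R) := by
      refine Integrable.of_bound hmt.aestronglyMeasurable 1 ?_
      exact (traj_ae G R hid hne (T + 1) x hx).mono fun ω hω => pairing_bound G f hf1 _ hω
    have hInteg2 := (hmp.symm.integrable_comp_emb (MeasurableEquiv.measurableEmbedding _)).2 hInteg
    rw [← hmp.symm.integral_comp' (fun ω => ∑ h, f h * traj G (T + 1) x ω h)]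
    have hpt : ∀ p : (G × G × ℝ) × (Fin T → G × G × ℝ),
        traj G (T + 1) x ((MeasurableEquiv.piFinSuccAbove (fun _ => G × G × ℝ) 0).symm p) =
        traj G T (gibbsStepG G x p.1) p.2 := by
      intro p
      rw [traj_succ]
      rfl
    have hInteg3 : Integrable (fun p : (G × G × ℝ) × (Fin T → G × G × ℝ) =>
        ∑ h, f h * traj G T (gibbsStepG G x p.1) p.2 h)
        ((driveG G R).prod (Measure.pi fun _ : Fin T => driveG G R)) := by
      refine hInteg2.congr (Filter.Eventually.of_forall fun p => ?_)
      simp only [Function.comp_apply, hpt]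
    simp_rw [hpt]
    rw [integral_prod _ hInteg3]
    have : ∫ u, ∫ ω, ∑ h, f h * traj G T (gibbsStepG G x u) ω h
        ∂(Measure.pi fun _ : Fin T => driveG G R) ∂(driveG G R) =
        ∫ u, (1 - gapHat G R / 2) ^ T * ∑ h, f h * gibbsStepG G x u h ∂(driveG G R) := by
      refine integral_congr_ae ((ae_driveG G R hne).mono fun u hu => ?_)
      exact ih _ (step_mem G x hx u (hr1 _ hu.1) hu.2)
    rw [this, integral_const_mul, step_expect G R hsym hid hne f hf1 heig x hx, pow_succ]
    ring

/-- Lower bound on the mixing time of the Gibbs sampler on the simplex with geometry. -/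
theorem gibbs_sampler_cayley_lower_bound
    (R : Finset G) (hsym : ∀ r ∈ R, r⁻¹ ∈ R) (hid : (1 : G) ∉ R) (hne : R.Nonempty)
    (hgen : Subgroup.closure (R : Set G) = ⊤)
    (k : ℝ) (hk : 0 < k) (T : ℕ) (hT : (T : ℝ) < k / gapHat G R) :
    ∃ x ∈ simplexG G,
      1 / 2 * Real.exp (-k) - 4 * (Fintype.card G : ℝ) ^ (-(1 : ℝ) / 3) ≤
        tvDist (lawG G R x T) (UG G) := by
  have hpos : 0 < gapHat G R := by
    by_contra hcon
    have : k / gapHat G R ≤ 0 := div_nonpos_of_nonneg_of_nonpos hk.le (not_lt.1 hcon)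
    have h0 : (0 : ℝ) ≤ T := Nat.cast_nonneg _
    linarith
  have iD := isProb_driveG G R hne
  have hmt : ∀ x, Measurable (traj G T x) := fun x =>
    measurable_traj G T measurable_const measurable_id
  have hlaw : ∀ x, lawG G R x T =
      Measure.map (traj G T x) (Measure.pi fun _ : Fin T => driveG G R) := fun _ => rfl
  have hprob : ∀ x, IsProbabilityMeasure (lawG G R x T) := by
    intro x
    rw [hlaw]
    exact Measure.isProbabilityMeasure_map (hmt x).aemeasurable
  have hbdd : ∀ x, BddAbove (Set.range fun A : {A : Set (G → ℝ) // MeasurableSet A} =>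
      ((lawG G R x T A).toReal - (UG G A).toReal)) := by
    intro x
    refine ⟨1, ?_⟩
    rintro _ ⟨A, rfl⟩
    have := hprob x
    have h1 : (lawG G R x T A).toReal ≤ 1 := measureReal_le_one
    have h2 : 0 ≤ (UG G A).toReal := ENNReal.toReal_nonneg
    simp only
    linarith
  obtain ⟨f, hf0, hf1, ⟨z, hz⟩, heig⟩ := exists_eigen G R hsym hid hne
  have hx : (Pi.single z 1 : G → ℝ) ∈ simplexG G := by
    constructor
    · intro g; simp only [Pi.single_apply]; split_ifs <;> norm_num
    · simp
  refine ⟨Pi.single z 1, hx, ?_⟩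
  set x : G → ℝ := Pi.single z 1 with hxdef
  set n : ℝ := (Fintype.card G : ℝ) with hn
  have hn1 : 1 ≤ n := by
    have : 1 ≤ Fintype.card G := Fintype.card_pos
    rw [hn]; exact_mod_cast this
  set a : ℝ := n ^ (-(1 : ℝ) / 3) with ha
  have ha0 : 0 < a := by positivity
  have ha3 : a ^ 3 = n⁻¹ := by
    rw [ha, ← Real.rpow_natCast, ← Real.rpow_mul (by positivity)]
    norm_num
    rw [Real.rpow_neg_one]
  rcases lt_or_ge (Fintype.card G) 8 with hsmall | hlarge
  · -- trivial case
    have h1 : (0 : ℝ) ≤ tvDist (lawG G R x T) (UG G) := by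
      have := le_ciSup (hbdd x) ⟨∅, MeasurableSet.empty⟩
      simp only [measure_empty, ENNReal.toReal_zero, sub_zero] at this
      exact this
    have h2 : Real.exp (-k) ≤ 1 := Real.exp_le_one_iff.2 (by linarith)
    have h3 : n⁻¹ ≤ a := by
      rw [ha, ← Real.rpow_neg_one]
      exact Real.rpow_le_rpow_of_exponent_le hn1 (by norm_num)
    have h4 : (8 : ℝ)⁻¹ ≤ n⁻¹ := by
      apply inv_anti₀ (by linarith)
      have : Fintype.card G ≤ 8 := hsmall.le
      rw [hn]; exact_mod_cast this
    have h5 : (8 : ℝ)⁻¹ = 1 / 8 := by norm_num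
    linarith
  have hn8 : 8 ≤ n := by rw [hn]; exact_mod_cast hlarge
  set A : Set (G → ℝ) := {y | a < ∑ g, f g * y g} with hA
  have hAm : MeasurableSet A := measurableSet_lt measurable_const (measurable_pairing G f)
  have hU : (UG G A).toReal ≤ a := by
    refine (UG_tail G (by omega) f hf0 hf1 a ha0).trans ?_
    rw [div_le_iff₀ (by positivity)]
    have : a * (a ^ 2 * (n + 1)) = a ^ 3 * (n + 1) := by ring
    rw [this, ha3, mul_add, inv_mul_cancel₀ (by positivity)]
    have : 0 < n⁻¹ := by positivity
    linarith
  have hexp := traj_expect G R hsym hid hne f hf1 heig T x hx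
  have hFx : ∑ h, f h * x h = 1 := by simp [hxdef, Pi.single_apply, hz]
  rw [hFx, mul_one] at hexp
  have hL : (1 - gapHat G R / 2) ^ T ≤ a + (lawG G R x T A).toReal := by
    rw [← hexp, hlaw, Measure.map_apply (hmt x) hAm]
    have hmA : MeasurableSet (traj G T x ⁻¹' A) := hmt x hAm
    have e : a + (Measure.pi (fun _ : Fin T => driveG G R) (traj G T x ⁻¹' A)).toReal =
        ∫ ω, (a + (traj G T x ⁻¹' A).indicator (fun _ => (1 : ℝ)) ω)
          ∂(Measure.pi fun _ : Fin T => driveG G R) := by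
      rw [integral_add (integrable_const _) ((integrable_const _).indicator hmA),
        integral_indicator hmA]
      simp [Measure.real]
    rw [e]
    refine integral_mono_ae ?_ ((integrable_const _).add ((integrable_const _).indicator hmA)) ?_
    · refine Integrable.of_bound ((measurable_pairing G f).comp (hmt x)).aestronglyMeasurable 1 ?_
      exact (traj_ae G R hid hne T x hx).mono fun ω hω => pairing_bound G f hf1 _ hω
    · refine (traj_ae G R hid hne T x hx).mono fun ω hω => ?_
      have hb := (abs_le.1 (pairing_bound G f hf1 _ hω)).2
      by_cases hm : ω ∈ traj G T x ⁻¹' A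
      · simp only [Set.indicator_of_mem hm]
        linarith
      · simp only [Set.indicator_of_notMem hm]
        have : ¬ a < ∑ h, f h * traj G T x ω h := hm
        linarith [not_lt.1 this]
  have hgap := gap_le G R hid hne f hf1 z hz heig
  have hrho : Real.exp (-k) ≤ (1 - gapHat G R / 2) ^ T := by
    have hg2 : gapHat G R ≤ 1 / 2 := by
      refine hgap.trans ?_
      rw [div_le_iff₀ (by positivity)]
      linarith
    have h1 : Real.exp (-(gapHat G R)) ≤ 1 - gapHat G R / 2 := by
      rw [Real.exp_neg, inv_le_comm₀ (Real.exp_pos _) (by linarith)]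
      refine le_trans ?_ (Real.add_one_le_exp (gapHat G R))
      rw [inv_le_iff_one_le_mul₀ (by linarith)]
      nlinarith
    have h2 : (T : ℝ) * gapHat G R ≤ k := by
      rw [lt_div_iff₀ hpos] at hT
      exact hT.le
    calc Real.exp (-k) ≤ Real.exp (T * (-(gapHat G R))) := by
          apply Real.exp_le_exp.2; linarith
      _ = Real.exp (-(gapHat G R)) ^ T := by rw [← Real.exp_nat_mul]
      _ ≤ _ := pow_le_pow_left₀ (Real.exp_pos _).le h1 T
  have hfin := le_ciSup (hbdd x) ⟨A, hAm⟩
  have he0 := Real.exp_pos (-k)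
  change (lawG G R x T A).toReal - (UG G A).toReal ≤ tvDist (lawG G R x T) (UG G) at hfin
  linarith

end
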